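/- Let E = E(J_∅,{n_k},{c_k},{η_{k,j}}) be a homogeneous perfect set satisfying: there exist constants L ≥ 1 and c > 0 such that 1/L ≤ η_{k,i}/η_{k,j} ≤ L and η_{k,0} + η_{k,n_k} ≤ c·η_{k,i} for all k ≥ 1 and all 1 ≤ i, j ≤ n_k − 1. If dim_H E = 1, then dim_H f(E) = 1 for every 1-dimensional quasisymmetric mapping f. -/

import Mathlib

open Set Filter MeasureTheory
open scoped ENNReal

/-- `σ` is a valid word: the entry at (0-indexed) position `j` lies in `[1, n (j+1)]`,
so that words of length `k` correspond to indices `(i₁, …, i_k)` with `1 ≤ i_j ≤ n_j`. -/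
def ValidWord (n : ℕ → ℕ) (σ : List ℕ) : Prop :=
  ∀ j (h : j < σ.length), 1 ≤ σ.get ⟨j, h⟩ ∧ σ.get ⟨j, h⟩ ≤ n (j + 1)

/-- A homogeneous perfect structure with parameters `n`, `c`, `η` on `J_∅ = [0,1]`:
`a σ` and `b σ` are the left and right endpoints of the basic interval `J_σ = [a σ, b σ]`.
The fields record that `n k ≥ 2`, `0 < c k < 1`, `η k j ≥ 0`, that the children
`J_{σ*1}, …, J_{σ*n_{k+1}}` of `J_σ` (for `σ` of length `k`) are subintervals of `J_σ`
situated from left to right, that `|J_{σ*i}| = c_{k+1} |J_σ|`, and that the gaps have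
the prescribed lengths `η_{k+1,0}, …, η_{k+1,n_{k+1}}`. -/
structure HomogeneousPerfectStructure (n : ℕ → ℕ) (c : ℕ → ℝ) (η : ℕ → ℕ → ℝ) where
  hn : ∀ k, 1 ≤ k → 2 ≤ n k
  hc : ∀ k, 1 ≤ k → 0 < c k ∧ c k < 1
  hη : ∀ k j, 1 ≤ k → j ≤ n k → 0 ≤ η k j
  a : List ℕ → ℝ
  b : List ℕ → ℝ
  root_a : a [] = 0
  root_b : b [] = 1
  sub_left : ∀ σ, ValidWord n σ → ∀ i, 1 ≤ i → i ≤ n (σ.length + 1) →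
    a σ ≤ a (σ ++ [i])
  sub_right : ∀ σ, ValidWord n σ → ∀ i, 1 ≤ i → i ≤ n (σ.length + 1) →
    b (σ ++ [i]) ≤ b σ
  ordered : ∀ σ, ValidWord n σ → ∀ i, 1 ≤ i → i + 1 ≤ n (σ.length + 1) →
    b (σ ++ [i]) ≤ a (σ ++ [i + 1])
  len_eq : ∀ σ, ValidWord n σ → ∀ i, 1 ≤ i → i ≤ n (σ.length + 1) →
    b (σ ++ [i]) - a (σ ++ [i]) = c (σ.length + 1) * (b σ - a σ)
  gap_left : ∀ σ, ValidWord n σ →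
    a (σ ++ [1]) - a σ = η (σ.length + 1) 0
  gap_right : ∀ σ, ValidWord n σ →
    b σ - b (σ ++ [n (σ.length + 1)]) = η (σ.length + 1) (n (σ.length + 1))
  gap_mid : ∀ σ, ValidWord n σ → ∀ i, 1 ≤ i → i ≤ n (σ.length + 1) - 1 →
    a (σ ++ [i + 1]) - b (σ ++ [i]) = η (σ.length + 1) i

namespace HomogeneousPerfectStructure

variable {n : ℕ → ℕ} {c : ℕ → ℝ} {η : ℕ → ℕ → ℝ}

/-- `E_k`, the union of the basic intervals of order `k`. -/
def Ek (S : HomogeneousPerfectStructure n c η) (k : ℕ) : Set ℝ :=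
  ⋃ σ ∈ {σ : List ℕ | ValidWord n σ ∧ σ.length = k}, Icc (S.a σ) (S.b σ)

/-- The homogeneous perfect set `E = ⋂_{k ≥ 0} E_k`. -/
def E (S : HomogeneousPerfectStructure n c η) : Set ℝ := ⋂ k, S.Ek k

end HomogeneousPerfectStructure

/-- `max_{1 ≤ l ≤ n_k - 1} η_{k,l}`. -/
noncomputable def etaMax (n : ℕ → ℕ) (η : ℕ → ℕ → ℝ) (k : ℕ) : ℝ :=
  sSup (η k '' {l | 1 ≤ l ∧ l ≤ n k - 1})

/-- `min_{1 ≤ l ≤ n_k - 1} η_{k,l}`. -/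
noncomputable def etaMin (n : ℕ → ℕ) (η : ℕ → ℕ → ℝ) (k : ℕ) : ℝ :=
  sInf (η k '' {l | 1 ≤ l ∧ l ≤ n k - 1})

/-- A homeomorphism `f : ℝ → ℝ` is a 1-dimensional quasisymmetric mapping if there is a
homeomorphism `η : [0,∞) → [0,∞)` such that
`|f x - f a| / |f x - f b| ≤ η (|x - a| / |x - b|)` for all triples of distinct points. -/
def IsQuasisymmetric (f : ℝ ≃ₜ ℝ) : Prop :=
  ∃ h : (Set.Ici (0 : ℝ)) ≃ₜ (Set.Ici (0 : ℝ)),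
    ∀ a b x : ℝ, x ≠ a → x ≠ b → a ≠ b →
      |f x - f a| / |f x - f b| ≤
        (h ⟨|x - a| / |x - b|, Set.mem_Ici.mpr (div_nonneg (abs_nonneg _) (abs_nonneg _))⟩ : ℝ)

/-- Increasing maps of the line that are doubling with constant `H`. -/
structure Dbl (g : ℝ → ℝ) (H : ℝ) : Prop where
  mono : StrictMono g
  one_le : 1 ≤ H
  right : ∀ x t, 0 < t → g (x + t) - g x ≤ H * (g x - g (x - t))
  left : ∀ x t, 0 < t → g x - g (x - t) ≤ H * (g (x + t) - g x)

namespace Dbl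

variable {g : ℝ → ℝ} {H : ℝ}

lemma triple (hg : Dbl g H) {x y : ℝ} (hxy : x < y) :
    g (y + (y - x)) - g (x - (y - x)) ≤ (1 + 2 * H) * (g y - g x) := by
  have h1 := hg.right y (y - x) (by linarith)
  have h2 := hg.left x (y - x) (by linarith)
  rw [show y - (y - x) = x by ring] at h1
  rw [show x + (y - x) = y by ring] at h2
  linarith

lemma scale_pow (hg : Dbl g H) (N : ℕ) {x y : ℝ} (hxy : x < y) :
    g (y + (3 ^ N - 1) / 2 * (y - x)) - g (x - (3 ^ N - 1) / 2 * (y - x))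
      ≤ (1 + 2 * H) ^ N * (g y - g x) := by
  induction N with
  | zero => simp
  | succ N ih =>
    have h3 : (1 : ℝ) ≤ 3 ^ N := one_le_pow₀ (by norm_num)
    have hl : 0 < y - x := by linarith
    have hlt : x - (3 ^ N - 1) / 2 * (y - x) < y + (3 ^ N - 1) / 2 * (y - x) := by
      nlinarith [mul_nonneg (sub_nonneg.2 h3) hl.le]
    have := hg.triple hlt
    have e1 : y + (3 ^ N - 1) / 2 * (y - x) + (y + (3 ^ N - 1) / 2 * (y - x) -
        (x - (3 ^ N - 1) / 2 * (y - x))) = y + (3 ^ (N + 1) - 1) / 2 * (y - x) := by ring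
    have e2 : x - (3 ^ N - 1) / 2 * (y - x) - (y + (3 ^ N - 1) / 2 * (y - x) -
        (x - (3 ^ N - 1) / 2 * (y - x))) = x - (3 ^ (N + 1) - 1) / 2 * (y - x) := by ring
    rw [e1, e2] at this
    have hH := hg.one_le
    calc _ ≤ _ := this
      _ ≤ (1 + 2 * H) * ((1 + 2 * H) ^ N * (g y - g x)) := by gcongr
      _ = _ := by ring

lemma scale (hg : Dbl g H) (K : ℝ) : ∃ B : ℝ, 1 ≤ B ∧ ∀ x y u v : ℝ, x < y →
    x - K * (y - x) ≤ u → v ≤ y + K * (y - x) → g v - g u ≤ B * (g y - g x) := by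
  obtain ⟨N, hN⟩ := pow_unbounded_of_one_lt (2 * K + 1) (by norm_num : (1 : ℝ) < 3)
  have hH := hg.one_le
  refine ⟨(1 + 2 * H) ^ N, one_le_pow₀ (by linarith), fun x y u v hxy hu hv => ?_⟩
  refine le_trans ?_ (hg.scale_pow N hxy)
  have : K * (y - x) ≤ (3 ^ N - 1) / 2 * (y - x) := by
    apply mul_le_mul_of_nonneg_right <;> linarith
  have h1 := hg.mono.monotone (show v ≤ y + (3 ^ N - 1) / 2 * (y - x) by linarith)
  have h2 := hg.mono.monotone (show x - (3 ^ N - 1) / 2 * (y - x) ≤ u by linarith)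
  linarith

lemma lower (hg : Dbl g H) : ∃ C q : ℝ, 1 ≤ C ∧ 0 ≤ q ∧ ∀ a b u v : ℝ, u < v → a ≤ u → v ≤ b →
    g b - g a ≤ C * ((b - a) / (v - u)) ^ q * (g v - g u) := by
  have hH := hg.one_le
  have hB : 1 ≤ 1 + 2 * H := by linarith
  have hlB : 0 ≤ Real.log (1 + 2 * H) := Real.log_nonneg hB
  have h3 : 0 < Real.log 3 := Real.log_pos (by norm_num)
  refine ⟨(1 + 2 * H) ^ 2, Real.log (1 + 2 * H) / Real.log 3, one_le_pow₀ hB, by positivity, ?_⟩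
  intro a b u v huv hau hvb
  set R := (b - a) / (v - u) with hR
  have hl : 0 < v - u := by linarith
  have hR1 : 1 ≤ R := by rw [hR, one_le_div hl]; linarith
  have hR0 : 0 < R := by linarith
  have hba : R * (v - u) = b - a := by rw [hR]; field_simp
  set N := ⌈Real.log R / Real.log 3 + 1⌉₊ with hN
  have hlR : 0 ≤ Real.log R := Real.log_nonneg hR1
  have hN1 : Real.log R / Real.log 3 + 1 ≤ N := Nat.le_ceil _
  have hN2 : (N : ℝ) < Real.log R / Real.log 3 + 1 + 1 := Nat.ceil_lt_add_one (by positivity)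
  have h3N : 3 * R ≤ 3 ^ N := by
    rw [← Real.log_le_log_iff (by positivity) (by positivity), Real.log_pow,
      Real.log_mul (by norm_num) hR0.ne']
    have := mul_le_mul_of_nonneg_right hN1 h3.le
    rw [add_mul, div_mul_cancel₀ _ h3.ne'] at this
    linarith
  have hs := hg.scale_pow N huv
  have hext : b - a ≤ (3 ^ N - 1) / 2 * (v - u) := by
    rw [← hba]; apply mul_le_mul_of_nonneg_right <;> linarith
  have h1 := hg.mono.monotone (show b ≤ v + (3 ^ N - 1) / 2 * (v - u) by linarith)
  have h2 := hg.mono.monotone (show u - (3 ^ N - 1) / 2 * (v - u) ≤ a by linarith)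
  have hD : 0 ≤ g v - g u := by linarith [hg.mono huv]
  refine (show g b - g a ≤ (1 + 2 * H) ^ N * (g v - g u) by linarith).trans ?_
  apply mul_le_mul_of_nonneg_right _ hD
  rw [← Real.log_le_log_iff (by positivity) (by positivity), Real.log_pow,
    Real.log_mul (by positivity) (by positivity), Real.log_pow, Real.log_rpow hR0]
  have := mul_le_mul_of_nonneg_right hN2.le hlB
  calc _ ≤ _ := this
    _ = _ := by push_cast; field_simp; ring

lemma half (hg : Dbl g H) (N : ℕ) : ∀ a b u v : ℝ, u ≤ v → a ≤ u → v ≤ b →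
    (v - u) * 2 ^ N * 2 ≤ b - a → g v - g u ≤ (H / (1 + H)) ^ N * (g b - g a) := by
  have hH := hg.one_le
  induction N with
  | zero =>
    intro a b u v huv hau hvb _
    have h1 := hg.mono.monotone hau
    have h2 := hg.mono.monotone hvb
    simp; linarith
  | succ N ih =>
    intro a b u v huv hau hvb h
    have h2N : (1 : ℝ) ≤ 2 ^ N := one_le_pow₀ (by norm_num)
    rcases huv.eq_or_lt with rfl | huv'
    · simp only [sub_self]
      have := hg.mono.monotone (hau.trans hvb)
      exact mul_nonneg (by positivity) (by linarith)
    have h4 : 4 * (v - u) ≤ b - a := by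
      rw [pow_succ] at h
      nlinarith
    have hstep : ∃ u' v', u' ≤ v' ∧ a ≤ u' ∧ v' ≤ b ∧ v' - u' = 2 * (v - u) ∧
        g v - g u ≤ (H / (1 + H)) * (g v' - g u') := by
      rcases le_total (v - u) (b - v) with hc | hc
      · refine ⟨u, v + (v - u), by linarith, hau, by linarith, by ring, ?_⟩
        have := hg.left v (v - u) (by linarith)
        rw [show v - (v - u) = u by ring] at this
        rw [div_mul_eq_mul_div, le_div_iff₀ (by linarith)]
        linarith
      · refine ⟨u - (v - u), v, by linarith, by linarith, hvb, by ring, ?_⟩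
        have := hg.right u (v - u) (by linarith)
        rw [show u + (v - u) = v by ring] at this
        rw [div_mul_eq_mul_div, le_div_iff₀ (by linarith)]
        linarith
    obtain ⟨u', v', h1, h2, h3, h5, h6⟩ := hstep
    have := ih a b u' v' h1 h2 h3 (by rw [h5]; rw [pow_succ] at h; linarith)
    calc _ ≤ _ := h6
      _ ≤ (H / (1 + H)) * ((H / (1 + H)) ^ N * (g b - g a)) := by gcongr
      _ = _ := by ring

lemma theta (hg : Dbl g H) : 0 < H / (1 + H) ∧ H / (1 + H) < 1 := by
  have hH := hg.one_le
  exact ⟨by positivity, by rw [div_lt_one (by linarith)]; linarith⟩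

lemma upper (hg : Dbl g H) : ∃ C p : ℝ, 0 < C ∧ 0 < p ∧ ∀ a b u v : ℝ, u < v → a ≤ u → v ≤ b →
    g v - g u ≤ C * ((v - u) / (b - a)) ^ p * (g b - g a) := by
  obtain ⟨ht0, ht1⟩ := hg.theta
  set θ := H / (1 + H) with hθ
  have hlt : Real.log θ < 0 := Real.log_neg ht0 ht1
  have hl2 : 0 < Real.log 2 := Real.log_pos (by norm_num)
  refine ⟨(θ ^ 2)⁻¹, - Real.log θ / Real.log 2, by positivity, div_pos (by linarith) hl2, ?_⟩
  intro a b u v huv hau hvb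
  have hl : 0 < v - u := by linarith
  have hba : 0 < b - a := by linarith
  set r := (v - u) / (b - a) with hr
  have hr0 : 0 < r := by positivity
  have hrv : r * (b - a) = v - u := by rw [hr]; field_simp
  set N := ⌊- Real.log r / Real.log 2 - 1⌋₊ with hN
  have hD : 0 ≤ g b - g a := by linarith [hg.mono (show a < b by linarith)]
  have hN1 : - Real.log r / Real.log 2 - 1 < N + 1 := Nat.lt_floor_add_one _
  have key : θ ^ N ≤ (θ ^ 2)⁻¹ * r ^ (- Real.log θ / Real.log 2) := by
    rw [← Real.log_le_log_iff (by positivity) (by positivity), Real.log_pow,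
      Real.log_mul (by positivity) (by positivity), Real.log_inv, Real.log_pow, Real.log_rpow hr0]
    have h := mul_le_mul_of_nonneg_right hN1.le (show 0 ≤ - Real.log θ by linarith)
    have e : -Real.log θ / Real.log 2 * Real.log r = - (-Real.log r / Real.log 2 * -Real.log θ) := by
      field_simp
    rw [e]
    push_cast
    linarith
  refine le_trans ?_ (mul_le_mul_of_nonneg_right key hD)
  by_cases hN0 : N = 0
  · rw [hN0]
    have h1 := hg.mono.monotone hau
    have h2 := hg.mono.monotone hvb
    simp; linarith
  · apply hg.half N a b u v huv.le hau hvb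
    have hx : (N : ℝ) ≤ - Real.log r / Real.log 2 - 1 := by
      apply Nat.floor_le
      by_contra hneg
      exact hN0 (Nat.floor_of_nonpos (not_le.1 hneg).le)
    rw [← hrv]
    have : r * 2 ^ N * 2 ≤ 1 := by
      rw [← Real.log_le_log_iff (by positivity) (by positivity), Real.log_mul (by positivity) (by positivity),
        Real.log_mul (by positivity) (by positivity), Real.log_pow, Real.log_one]
      have h := mul_le_mul_of_nonneg_right hx hl2.le
      rw [sub_mul, div_mul_cancel₀ _ hl2.ne'] at h
      linarith
    nlinarith

lemma ratio (hg : Dbl g H) (ε : ℝ) (hε : 0 < ε) : ∃ A : ℝ, 0 ≤ A ∧ ∀ a b u v : ℝ, u < v → a ≤ u →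
    v ≤ b → g b - g a ≤ Real.exp ε * ((b - a) / (v - u)) ^ A * (g v - g u) := by
  obtain ⟨ht0, ht1⟩ := hg.theta
  obtain ⟨C, q, hC, hq, hlow⟩ := hg.lower
  have he : Real.exp (-ε) < 1 := by rw [Real.exp_lt_one_iff]; linarith
  obtain ⟨N, hN⟩ := exists_pow_lt_of_lt_one (show 0 < (1 - Real.exp (-ε)) / 2 by linarith) ht1
  set τ : ℝ := (2 ^ N * 2)⁻¹ with hτ
  have h2N : (1 : ℝ) ≤ 2 ^ N := one_le_pow₀ (by norm_num)
  have hτ0 : 0 < τ := by positivity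
  have hτ1 : τ < 1 := by
    rw [hτ]; apply inv_lt_one_of_one_lt₀; linarith
  set ρ := (1 - τ)⁻¹ with hρ
  have hρ1 : 1 < ρ := by rw [hρ, one_lt_inv₀ (by linarith)]; linarith
  have hlρ : 0 < Real.log ρ := Real.log_pos hρ1
  have hlC : 0 ≤ Real.log C := Real.log_nonneg hC
  refine ⟨q + Real.log C / Real.log ρ, by positivity, ?_⟩
  intro a b u v huv hau hvb
  have hl : 0 < v - u := by linarith
  have hba : 0 < b - a := by linarith
  set R := (b - a) / (v - u) with hR
  have hR1 : 1 ≤ R := by rw [hR, one_le_div hl]; linarith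
  have hR0 : 0 < R := by linarith
  have hD : 0 ≤ g v - g u := by linarith [hg.mono huv]
  have hDab : 0 ≤ g b - g a := by linarith [hg.mono (show a < b by linarith)]
  by_cases hc : (b - a) - (v - u) ≤ τ * (b - a)
  · have hc' : ((b - a) - (v - u)) * 2 ^ N * 2 ≤ b - a := by
      have : ((b - a) - (v - u)) * (2 ^ N * 2) ≤ τ * (b - a) * (2 ^ N * 2) := by gcongr
      rw [hτ] at this
      have e : (2 ^ N * 2 : ℝ)⁻¹ * (b - a) * (2 ^ N * 2) = b - a := by field_simp
      rw [e] at this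
      linarith
    have h1 := hg.half N a b a u hau le_rfl (by linarith) (by
      refine le_trans ?_ hc'
      apply mul_le_mul_of_nonneg_right _ (by norm_num)
      apply mul_le_mul_of_nonneg_right _ (by positivity)
      linarith)
    have h2 := hg.half N a b v b hvb (by linarith) le_rfl (by
      refine le_trans ?_ hc'
      apply mul_le_mul_of_nonneg_right _ (by norm_num)
      apply mul_le_mul_of_nonneg_right _ (by positivity)
      linarith)
    have h3 : (H / (1 + H)) ^ N * (g b - g a) ≤ (1 - Real.exp (-ε)) / 2 * (g b - g a) := by gcongr
    have h4 : Real.exp (-ε) * (g b - g a) ≤ g v - g u := by linarith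
    have h5 : g b - g a ≤ Real.exp ε * (g v - g u) := by
      calc g b - g a = Real.exp ε * (Real.exp (-ε) * (g b - g a)) := by
            rw [← mul_assoc, ← Real.exp_add]; simp
        _ ≤ _ := by gcongr
    refine h5.trans ?_
    apply mul_le_mul_of_nonneg_right _ hD
    exact le_mul_of_one_le_right (Real.exp_pos _).le (Real.one_le_rpow hR1 (by positivity))
  · push Not at hc
    have hRρ : ρ ≤ R := by
      rw [hρ, hR, inv_le_iff_one_le_mul₀ (by linarith), div_mul_eq_mul_div, le_div_iff₀ hl]
      linarith
    refine (hlow a b u v huv hau hvb).trans ?_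
    apply mul_le_mul_of_nonneg_right _ hD
    rw [← Real.log_le_log_iff (by positivity) (by positivity), Real.log_mul (by positivity) (by positivity),
      Real.log_mul (by positivity) (by positivity), Real.log_exp, Real.log_rpow hR0, Real.log_rpow hR0, add_mul]
    have : Real.log ρ ≤ Real.log R := Real.log_le_log (by linarith) hRρ
    have h6 : Real.log C ≤ Real.log C / Real.log ρ * Real.log R := by
      rw [div_mul_eq_mul_div, le_div_iff₀ hlρ]
      gcongr
    linarith

end Dbl

/-- Reversed words with zero-based letters. -/
def Wd (n : ℕ → ℕ) : ℕ → Finset (List ℕ)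
  | 0 => {[]}
  | k + 1 => (Finset.range (n (k + 1)) ×ˢ Wd n k).map
      ⟨fun q => q.1 :: q.2, fun q r h => by
        obtain ⟨h1, h2⟩ := List.cons.inj h
        exact Prod.ext h1 h2⟩

lemma mem_Wd_succ {n : ℕ → ℕ} {k : ℕ} {τ : List ℕ} :
    τ ∈ Wd n (k + 1) ↔ ∃ i < n (k + 1), ∃ ρ ∈ Wd n k, τ = i :: ρ := by
  simp only [Wd, Finset.mem_map, Finset.mem_product, Finset.mem_range, Prod.exists]
  constructor
  · rintro ⟨i, ρ, ⟨h1, h2⟩, rfl⟩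
    exact ⟨i, h1, ρ, h2, rfl⟩
  · rintro ⟨i, h1, ρ, h2, rfl⟩
    exact ⟨i, ρ, ⟨h1, h2⟩, rfl⟩

lemma cons_mem_Wd {n : ℕ → ℕ} {k : ℕ} {τ : List ℕ} {i : ℕ} (hτ : τ ∈ Wd n k) (hi : i < n (k + 1)) :
    i :: τ ∈ Wd n (k + 1) := mem_Wd_succ.2 ⟨i, hi, τ, hτ, rfl⟩

lemma sum_Wd_succ {n : ℕ → ℕ} {k : ℕ} (F : List ℕ → ℝ) :
    ∑ τ ∈ Wd n (k + 1), F τ = ∑ τ ∈ Wd n k, ∑ i ∈ Finset.range (n (k + 1)), F (i :: τ) := by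
  simp only [Wd, Finset.sum_map]
  rw [Finset.sum_product_right]
  rfl

lemma card_Wd_succ {n : ℕ → ℕ} {k : ℕ} :
    (Wd n (k + 1)).card = n (k + 1) * (Wd n k).card := by
  simp [Wd]

/-- The tree of intervals, with cells cut at the points `p τ i`. -/
structure Tr (n : ℕ → ℕ) (a b : List ℕ → ℝ) (p : List ℕ → ℕ → ℝ) (δ m : ℕ → ℝ) (K : ℝ) : Prop where
  a0 : a [] = 0
  b0 : b [] = 1
  hn : ∀ k, 2 ≤ n (k + 1)
  hK : 1 ≤ K
  mpos : ∀ k, 0 < m (k + 1)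
  dpos : ∀ k, 0 < δ k
  len : ∀ k, ∀ τ ∈ Wd n k, b τ - a τ = δ k
  p0 : ∀ k, ∀ τ ∈ Wd n k, p τ 0 = a τ
  pn : ∀ k, ∀ τ ∈ Wd n k, p τ (n (k + 1)) = b τ
  pa : ∀ k, ∀ τ ∈ Wd n k, ∀ i < n (k + 1), p τ i ≤ a (i :: τ)
  pb : ∀ k, ∀ τ ∈ Wd n k, ∀ i < n (k + 1), b (i :: τ) ≤ p τ (i + 1)
  cell_le : ∀ k, ∀ τ ∈ Wd n k, ∀ i < n (k + 1), p τ (i + 1) - p τ i ≤ δ (k + 1) + K * m (k + 1)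
  cell_ge : ∀ k, ∀ τ ∈ Wd n k, ∀ i < n (k + 1), δ (k + 1) + m (k + 1) / 2 ≤ p τ (i + 1) - p τ i

/-- Weights of words. -/
noncomputable def wt (g : ℝ → ℝ) (a b : List ℕ → ℝ) (p : List ℕ → ℕ → ℝ) : List ℕ → ℝ
  | [] => 1
  | i :: τ => wt g a b p τ * ((g (p τ (i + 1)) - g (p τ i)) / (g (b τ) - g (a τ)))

/-- Mass at level `k` of the words whose interval meets `[x, y]`. -/
noncomputable def mass (g : ℝ → ℝ) (n : ℕ → ℕ) (a b : List ℕ → ℝ) (p : List ℕ → ℕ → ℝ)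
    (k : ℕ) (x y : ℝ) : ℝ :=
  ∑ τ ∈ Wd n k, if a τ ≤ y ∧ x ≤ b τ then wt g a b p τ else 0

namespace Tr

variable {n : ℕ → ℕ} {a b : List ℕ → ℝ} {p : List ℕ → ℕ → ℝ} {δ m : ℕ → ℝ} {K : ℝ}
  {g : ℝ → ℝ} {H : ℝ}

lemma Wd_nonempty (T : Tr n a b p δ m K) (k : ℕ) : (Wd n k).Nonempty := by
  induction k with
  | zero => exact ⟨[], by simp [Wd]⟩
  | succ k ih =>
    obtain ⟨τ, hτ⟩ := ih
    exact ⟨0 :: τ, cons_mem_Wd hτ (by have := T.hn k; omega)⟩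

lemma d0 (T : Tr n a b p δ m K) : δ 0 = 1 := by
  have := T.len 0 [] (by simp [Wd])
  rw [T.a0, T.b0] at this
  linarith

lemma ab (T : Tr n a b p δ m K) {k : ℕ} {τ : List ℕ} (hτ : τ ∈ Wd n k) : a τ < b τ := by
  have := T.len k τ hτ
  have := T.dpos k
  linarith

lemma plt (T : Tr n a b p δ m K) {k : ℕ} {τ : List ℕ} (hτ : τ ∈ Wd n k) {i : ℕ}
    (hi : i < n (k + 1)) : p τ i < p τ (i + 1) := by
  have := T.cell_ge k τ hτ i hi
  have := T.dpos (k + 1)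
  have := T.mpos k
  linarith

/-- Telescoping over the cells. -/
lemma tele (T : Tr n a b p δ m K) (φ : ℝ → ℝ) {k : ℕ} {τ : List ℕ} (hτ : τ ∈ Wd n k) :
    ∑ i ∈ Finset.range (n (k + 1)), (φ (p τ (i + 1)) - φ (p τ i)) = φ (b τ) - φ (a τ) := by
  rw [Finset.sum_range_sub (fun i => φ (p τ i)), T.p0 k τ hτ, T.pn k τ hτ]

lemma sumlen (T : Tr n a b p δ m K) (k : ℕ) :
    n (k + 1) * (δ (k + 1) + m (k + 1) / 2) ≤ δ k := by
  obtain ⟨τ, hτ⟩ := T.Wd_nonempty k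
  have h := T.tele id hτ
  simp only [id] at h
  rw [T.len k τ hτ] at h
  rw [← h]
  have := Finset.card_nsmul_le_sum (Finset.range (n (k + 1))) (fun i => p τ (i + 1) - p τ i)
    (δ (k + 1) + m (k + 1) / 2) (fun i hi => T.cell_ge k τ hτ i (Finset.mem_range.1 hi))
  rwa [Finset.card_range, nsmul_eq_mul] at this

lemma dhalf (T : Tr n a b p δ m K) (k : ℕ) : δ (k + 1) ≤ δ k / 2 := by
  have h := T.sumlen k
  have h2 : (2 : ℝ) ≤ n (k + 1) := by exact_mod_cast T.hn k
  have := T.dpos (k + 1)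
  have := T.mpos k
  nlinarith

lemma dle (T : Tr n a b p δ m K) (k : ℕ) : δ k ≤ (1 / 2) ^ k := by
  induction k with
  | zero => simp [T.d0]
  | succ k ih =>
    have := T.dhalf k
    rw [pow_succ]; linarith

/-- Clamped telescoping at one level. -/
lemma lev (T : Tr n a b p δ m K) {ψ : ℝ → ℝ} (hψ : Monotone ψ) (k : ℕ) :
    ∑ τ ∈ Wd n k, (ψ (b τ) - ψ (a τ)) ≤ ψ 1 - ψ 0 := by
  induction k with
  | zero => simp [Wd, T.a0, T.b0]
  | succ k ih =>
    rw [sum_Wd_succ]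
    refine le_trans (Finset.sum_le_sum fun τ hτ => ?_) ih
    rw [← T.tele ψ hτ]
    refine Finset.sum_le_sum fun i hi => ?_
    have hi' := Finset.mem_range.1 hi
    have h1 := hψ (T.pa k τ hτ i hi')
    have h2 := hψ (T.pb k τ hτ i hi')
    linarith

/-- Disjointness of the cells: the cells inside `[x, y]` have total `φ`-length at most that of
`[x, y]`. -/
lemma cells (T : Tr n a b p δ m K) {φ : ℝ → ℝ} (hφ : Monotone φ) (k : ℕ) {x y : ℝ} (hxy : x ≤ y)
    (P : List ℕ → ℕ → Prop) [∀ τ i, Decidable (P τ i)]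
    (hP : ∀ τ ∈ Wd n k, ∀ i < n (k + 1), P τ i → x ≤ p τ i ∧ p τ (i + 1) ≤ y) :
    ∑ τ ∈ Wd n k, ∑ i ∈ Finset.range (n (k + 1)),
      (if P τ i then φ (p τ (i + 1)) - φ (p τ i) else 0) ≤ φ y - φ x := by
  set ψ : ℝ → ℝ := fun t => φ (max x (min t y)) with hψd
  have hψ : Monotone ψ := fun s t hst => hφ (by gcongr)
  have h1 : ψ 1 - ψ 0 ≤ φ y - φ x := by
    have h1 : φ (max x (min 1 y)) ≤ φ y := hφ (by simp [hxy])
    have h2 : φ x ≤ φ (max x (min 0 y)) := hφ (by simp)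
    simp only [hψd]; linarith
  refine le_trans ?_ ((T.lev hψ k).trans h1)
  refine Finset.sum_le_sum fun τ hτ => ?_
  rw [← T.tele ψ hτ]
  refine Finset.sum_le_sum fun i hi => ?_
  have hi' := Finset.mem_range.1 hi
  have hlt := T.plt hτ hi'
  split_ifs with h
  · obtain ⟨h3, h4⟩ := hP τ hτ i hi' h
    simp only [hψd]
    rw [min_eq_left h4, min_eq_left (by linarith : p τ i ≤ y), max_eq_right h3,
      max_eq_right (by linarith)]
  · linarith [hψ hlt.le]

lemma wt_pos (T : Tr n a b p δ m K) (hg : Dbl g H) (k : ℕ) : ∀ τ ∈ Wd n k, 0 < wt g a b p τ := by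
  induction k with
  | zero => intro τ hτ; simp [Wd] at hτ; simp [hτ, wt]
  | succ k ih =>
    intro τ hτ
    obtain ⟨i, hi, ρ, hρ, rfl⟩ := mem_Wd_succ.1 hτ
    have h1 := hg.mono (T.plt hρ hi)
    have h2 := hg.mono (T.ab hρ)
    exact mul_pos (ih ρ hρ) (div_pos (by linarith) (by linarith))

lemma wt_sum_children (T : Tr n a b p δ m K) (hg : Dbl g H) {k : ℕ} {τ : List ℕ} (hτ : τ ∈ Wd n k) :
    ∑ i ∈ Finset.range (n (k + 1)), wt g a b p (i :: τ) = wt g a b p τ := by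
  simp only [wt]
  rw [← Finset.mul_sum, ← Finset.sum_div, T.tele g hτ, div_self, mul_one]
  have := hg.mono (T.ab hτ)
  linarith

lemma wt_sum (T : Tr n a b p δ m K) (hg : Dbl g H) (k : ℕ) : ∑ τ ∈ Wd n k, wt g a b p τ = 1 := by
  induction k with
  | zero => simp [Wd, wt]
  | succ k ih =>
    rw [sum_Wd_succ, ← ih]
    exact Finset.sum_congr rfl fun τ hτ => T.wt_sum_children hg hτ

lemma mass_le_one (T : Tr n a b p δ m K) (hg : Dbl g H) (k : ℕ) (x y : ℝ) :
    mass g n a b p k x y ≤ 1 := by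
  rw [← T.wt_sum hg k, mass]
  refine Finset.sum_le_sum fun τ hτ => ?_
  have := T.wt_pos hg k τ hτ
  split_ifs <;> linarith

lemma sub (T : Tr n a b p δ m K) {k : ℕ} {τ : List ℕ} (hτ : τ ∈ Wd n k) {i : ℕ}
    (hi : i < n (k + 1)) : a τ ≤ a (i :: τ) ∧ b (i :: τ) ≤ b τ := by
  have hmono : ∀ j, j ≤ n (k + 1) → p τ 0 ≤ p τ j := by
    intro j
    induction j with
    | zero => intro _; exact le_rfl
    | succ j ih => intro hj; exact (ih (by omega)).trans (T.plt hτ (by omega)).le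
  have hmono2 : ∀ j, i + 1 + j ≤ n (k + 1) → p τ (i + 1) ≤ p τ (i + 1 + j) := by
    intro j
    induction j with
    | zero => intro _; exact le_rfl
    | succ j ih => intro hj; exact (ih (by omega)).trans (T.plt hτ (i := i + 1 + j) (by omega)).le
  constructor
  · rw [← T.p0 k τ hτ]
    exact (hmono i hi.le).trans (T.pa k τ hτ i hi)
  · rw [← T.pn k τ hτ]
    refine (T.pb k τ hτ i hi).trans ?_
    have := hmono2 (n (k + 1) - (i + 1)) (by omega)
    rwa [show i + 1 + (n (k + 1) - (i + 1)) = n (k + 1) by omega] at this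

lemma mem01 (T : Tr n a b p δ m K) (k : ℕ) : ∀ τ ∈ Wd n k, 0 ≤ a τ ∧ b τ ≤ 1 := by
  induction k with
  | zero => intro τ hτ; simp [Wd] at hτ; simp [hτ, T.a0, T.b0]
  | succ k ih =>
    intro τ hτ
    obtain ⟨i, hi, ρ, hρ, rfl⟩ := mem_Wd_succ.1 hτ
    have h1 := ih ρ hρ
    have h2 := T.sub hρ hi
    exact ⟨h1.1.trans h2.1, h2.2.trans h1.2⟩

lemma mass_succ (T : Tr n a b p δ m K) (hg : Dbl g H) (k : ℕ) (x y : ℝ) :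
    mass g n a b p (k + 1) x y ≤ mass g n a b p k x y := by
  rw [mass, mass, sum_Wd_succ]
  refine Finset.sum_le_sum fun τ hτ => ?_
  split_ifs with h
  · rw [← T.wt_sum_children hg hτ]
    refine Finset.sum_le_sum fun i hi => ?_
    have := T.wt_pos hg (k + 1) (i :: τ) (cons_mem_Wd hτ (Finset.mem_range.1 hi))
    split_ifs <;> linarith
  · apply le_of_eq
    refine Finset.sum_eq_zero fun i hi => ?_
    have h2 := T.sub hτ (Finset.mem_range.1 hi)
    rw [if_neg]
    rintro ⟨h3, h4⟩
    exact h ⟨h2.1.trans h3, h4.trans h2.2⟩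

lemma mass_anti (T : Tr n a b p δ m K) (hg : Dbl g H) (x y : ℝ) :
    Antitone (fun k => mass g n a b p k x y) :=
  antitone_nat_of_succ_le fun k => T.mass_succ hg k x y

/-- The cell is not much longer than the interval. -/
lemma cell_ratio (T : Tr n a b p δ m K) {k : ℕ} {τ : List ℕ} (hτ : τ ∈ Wd n k) {i : ℕ}
    (hi : i < n (k + 1)) :
    (p τ (i + 1) - p τ i) / (b (i :: τ) - a (i :: τ)) ≤ (δ k / (n (k + 1) * δ (k + 1))) ^ (2 * K) := by
  rw [T.len (k + 1) _ (cons_mem_Wd hτ hi)]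
  have hd := T.dpos (k + 1)
  have hm := T.mpos k
  have hK := T.hK
  have h2 : (2 : ℝ) ≤ n (k + 1) := by exact_mod_cast T.hn k
  have hs := T.sumlen k
  have hc := T.cell_le k τ hτ i hi
  set N : ℝ := ((n (k + 1) : ℕ) : ℝ) with hN
  set s := δ k / (N * δ (k + 1)) - 1 with hsd
  have hpos : 0 < N * δ (k + 1) := by positivity
  have h1 : m (k + 1) / δ (k + 1) ≤ 2 * s := by
    rw [hsd, div_le_iff₀ hd]
    have : 2 * (δ k / (N * δ (k + 1)) - 1) * δ (k + 1) = 2 * (δ k - N * δ (k + 1)) / N := by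
      field_simp
    rw [this, le_div_iff₀ (by linarith)]
    linarith
  have hs0 : 0 ≤ s := by
    have : 0 < m (k + 1) / δ (k + 1) := by positivity
    linarith
  have hB := one_add_mul_self_le_rpow_one_add (show -1 ≤ s by linarith) (show 1 ≤ 2 * K by linarith)
  have e : 1 + s = δ k / (N * δ (k + 1)) := by rw [hsd]; ring
  rw [e] at hB
  refine le_trans ?_ hB
  rw [div_le_iff₀ hd]
  rw [div_le_iff₀ hd] at h1
  nlinarith

lemma cardpos (T : Tr n a b p δ m K) (k : ℕ) : (0 : ℝ) < (Wd n k).card := by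
  exact_mod_cast Finset.card_pos.2 (T.Wd_nonempty k)

lemma wt_bound1 (T : Tr n a b p δ m K) (hg : Dbl g H) (ε : ℝ) (hε : 0 < ε) :
    ∃ A : ℝ, 0 ≤ A ∧ ∀ k, ∀ τ ∈ Wd n k,
      wt g a b p τ ≤ (g 1 - g 0)⁻¹ * Real.exp (ε * k) * (1 / ((Wd n k).card * δ k)) ^ A *
        (g (b τ) - g (a τ)) := by
  obtain ⟨A, hA, hrat⟩ := hg.ratio ε hε
  have h01 : 0 < g 1 - g 0 := by linarith [hg.mono (zero_lt_one (α := ℝ))]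
  have hK := T.hK
  refine ⟨2 * K * A, by positivity, fun k => ?_⟩
  induction k with
  | zero =>
    intro τ hτ
    simp [Wd] at hτ
    simp [hτ, wt, T.a0, T.b0, Wd, T.d0]
    rw [inv_mul_cancel₀ h01.ne']
  | succ k ih =>
    intro τ hτ
    obtain ⟨i, hi, ρ, hρ, rfl⟩ := mem_Wd_succ.1 hτ
    have hab := T.ab hτ
    have h1 : 0 < g (b ρ) - g (a ρ) := by linarith [hg.mono (T.ab hρ)]
    have h2 : 0 < g (p ρ (i + 1)) - g (p ρ i) := by linarith [hg.mono (T.plt hρ hi)]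
    have h3 : 0 < g (b (i :: ρ)) - g (a (i :: ρ)) := by linarith [hg.mono hab]
    have hr := hrat _ _ _ _ hab (T.pa k ρ hρ i hi) (T.pb k ρ hρ i hi)
    have hcr := T.cell_ratio hρ hi
    have hd := T.dpos k
    have hd1 := T.dpos (k + 1)
    have hcard := T.cardpos k
    have hn0 : (0 : ℝ) < n (k + 1) := by have := T.hn k; exact_mod_cast (by omega)
    have hr0 : 0 ≤ (p ρ (i + 1) - p ρ i) / (b (i :: ρ) - a (i :: ρ)) :=
      div_nonneg (by linarith [T.plt hρ hi]) (by linarith)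
    have hcr2 : ((p ρ (i + 1) - p ρ i) / (b (i :: ρ) - a (i :: ρ))) ^ A ≤
        (δ k / (n (k + 1) * δ (k + 1))) ^ (2 * K * A) := by
      rw [Real.rpow_mul (by positivity)]
      exact Real.rpow_le_rpow hr0 hcr hA
    have hV : (1 / (((Wd n (k + 1)).card : ℝ) * δ (k + 1))) ^ (2 * K * A) =
        (1 / ((Wd n k).card * δ k)) ^ (2 * K * A) * (δ k / (n (k + 1) * δ (k + 1))) ^ (2 * K * A) := by
      rw [← Real.mul_rpow (by positivity) (by positivity), card_Wd_succ]
      congr 1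
      push_cast
      field_simp
    set G := (g 1 - g 0)⁻¹ * Real.exp (ε * k) * (1 / ((Wd n k).card * δ k)) ^ (2 * K * A) with hG
    have hG0 : 0 ≤ G := by positivity
    have e1 : Real.exp (ε * ((k + 1 : ℕ) : ℝ)) = Real.exp (ε * k) * Real.exp ε := by
      rw [← Real.exp_add]; congr 1; push_cast; ring
    calc wt g a b p (i :: ρ) = wt g a b p ρ / (g (b ρ) - g (a ρ)) * (g (p ρ (i + 1)) - g (p ρ i)) := by
          simp only [wt]; ring
      _ ≤ G * (g (p ρ (i + 1)) - g (p ρ i)) := by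
          gcongr
          rw [div_le_iff₀ h1]
          exact ih ρ hρ
      _ ≤ G * (Real.exp ε * (δ k / (n (k + 1) * δ (k + 1))) ^ (2 * K * A) *
            (g (b (i :: ρ)) - g (a (i :: ρ)))) := by
          gcongr
          refine hr.trans ?_
          gcongr
      _ = _ := by rw [hV, e1, hG]; ring

lemma wt_bound (T : Tr n a b p δ m K) (hg : Dbl g H)
    (hdim : ∀ ε : ℝ, 0 < ε → ∃ C : ℝ, 0 < C ∧ ∀ k, 1 / ((Wd n k).card * δ k) ≤ C * (δ k) ^ (-ε))
    (ε : ℝ) (hε : 0 < ε) :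
    ∃ C : ℝ, 0 < C ∧ ∀ k, ∀ τ ∈ Wd n k,
      wt g a b p τ ≤ C * δ k ^ (-ε) * (g (b τ) - g (a τ)) := by
  have hl2 : 0 < Real.log 2 := Real.log_pos (by norm_num)
  obtain ⟨A, hA, hw⟩ := T.wt_bound1 hg (ε / 2 * Real.log 2) (by positivity)
  obtain ⟨C, hC, hV⟩ := hdim (ε / (2 * (A + 1))) (by positivity)
  have h01 : 0 < g 1 - g 0 := by linarith [hg.mono (zero_lt_one (α := ℝ))]
  refine ⟨(g 1 - g 0)⁻¹ * C ^ A, by positivity, fun k τ hτ => (hw k τ hτ).trans ?_⟩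
  have hd := T.dpos k
  have hcard := T.cardpos k
  have hd1 : δ k ≤ 1 := (T.dle k).trans (pow_le_one₀ (by norm_num) (by norm_num))
  apply mul_le_mul_of_nonneg_right _ (by linarith [hg.mono (T.ab hτ)])
  have h1 : Real.exp (ε / 2 * Real.log 2 * k) ≤ δ k ^ (-(ε / 2)) := by
    have hld : Real.log (δ k) ≤ - (k * Real.log 2) := by
      have := Real.log_le_log hd (T.dle k)
      rw [Real.log_pow] at this
      simpa using this
    rw [Real.rpow_def_of_pos hd]
    apply Real.exp_le_exp.2
    nlinarith
  have h2 : (1 / ((Wd n k).card * δ k)) ^ A ≤ C ^ A * δ k ^ (-(ε / 2)) := by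
    calc _ ≤ (C * δ k ^ (-(ε / (2 * (A + 1))))) ^ A := Real.rpow_le_rpow (by positivity) (hV k) hA
      _ = C ^ A * δ k ^ (-(ε / (2 * (A + 1))) * A) := by
          rw [Real.mul_rpow hC.le (by positivity), ← Real.rpow_mul hd.le]
      _ ≤ _ := by
          gcongr ?_ * ?_
          apply Real.rpow_le_rpow_of_exponent_ge hd hd1
          rw [neg_mul, neg_le_neg_iff, div_mul_eq_mul_div, div_le_div_iff₀ (by positivity) (by norm_num)]
          nlinarith
  calc _ ≤ (g 1 - g 0)⁻¹ * δ k ^ (-(ε / 2)) * (C ^ A * δ k ^ (-(ε / 2))) := by gcongr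
    _ = (g 1 - g 0)⁻¹ * C ^ A * (δ k ^ (-(ε / 2)) * δ k ^ (-(ε / 2))) := by ring
    _ = _ := by rw [← Real.rpow_add hd]; congr 2; ring

end Tr

namespace Tr

variable {n : ℕ → ℕ} {a b : List ℕ → ℝ} {p : List ℕ → ℕ → ℝ} {δ m : ℕ → ℝ} {K : ℝ}
  {g : ℝ → ℝ} {H : ℝ}

lemma holder (hg : Dbl g H) : ∃ q : ℝ, 0 < q ∧ ∀ s : ℝ, s < 1 → ∃ C : ℝ, 0 < C ∧
    ∀ u v : ℝ, u < v → -1 ≤ u → v ≤ 2 →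
      (v - u) ^ (-(q * (1 - s))) * (g v - g u) ≤ C * (g v - g u) ^ s := by
  obtain ⟨C, q, hC, hq, hup⟩ := hg.upper
  refine ⟨q, hq, fun s hs => ?_⟩
  have hD3 : 0 < g 2 - g (-1) := by linarith [hg.mono (show (-1 : ℝ) < 2 by norm_num)]
  set C3 := C * (1 / 3) ^ q * (g 2 - g (-1)) with hC3
  have hC30 : 0 < C3 := by positivity
  refine ⟨C3 ^ (1 - s), by positivity, fun u v huv hu hv => ?_⟩
  have hl : 0 < v - u := by linarith
  have hD : 0 < g v - g u := by linarith [hg.mono huv]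
  have h1 : g v - g u ≤ C3 * (v - u) ^ q := by
    refine (hup (-1) 2 u v huv hu hv).trans (le_of_eq ?_)
    rw [hC3, show (v - u) / (2 - -1) = (1 / 3) * (v - u) by ring,
      Real.mul_rpow (by norm_num) hl.le]
    ring
  have h2 : (g v - g u) ^ (1 - s) ≤ C3 ^ (1 - s) * (v - u) ^ (q * (1 - s)) := by
    rw [Real.rpow_mul hl.le, ← Real.mul_rpow hC30.le (by positivity)]
    exact Real.rpow_le_rpow hD.le h1 (by linarith)
  have h3 : (g v - g u) = (g v - g u) ^ (1 - s) * (g v - g u) ^ s := by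
    rw [← Real.rpow_add hD]; simp
  rw [Real.rpow_neg hl.le]
  have h4 : 0 < (v - u) ^ (q * (1 - s)) := by positivity
  rw [inv_mul_le_iff₀ h4]
  calc g v - g u = (g v - g u) ^ (1 - s) * (g v - g u) ^ s := h3
    _ ≤ (C3 ^ (1 - s) * (v - u) ^ (q * (1 - s))) * (g v - g u) ^ s := by gcongr
    _ = _ := by ring

lemma mass_succ_eq (k : ℕ) (x y : ℝ) : mass g n a b p (k + 1) x y =
    ∑ τ ∈ Wd n k, ∑ i ∈ Finset.range (n (k + 1)),
      (if a (i :: τ) ≤ y ∧ x ≤ b (i :: τ) then wt g a b p (i :: τ) else 0) := by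
  rw [mass, sum_Wd_succ]

lemma key (T : Tr n a b p δ m K) (hg : Dbl g H)
    (hdim : ∀ ε : ℝ, 0 < ε → ∃ C : ℝ, 0 < C ∧ ∀ k, 1 / ((Wd n k).card * δ k) ≤ C * (δ k) ^ (-ε))
    (s : ℝ) (hs0 : 0 < s) (hs1 : s < 1) :
    ∃ C : ℝ, 0 < C ∧ ∀ x y : ℝ, x < y → ∃ k, mass g n a b p k x y ≤ C * (g y - g x) ^ s := by
  obtain ⟨q, hq, hh⟩ := holder hg
  obtain ⟨C3, hC3, hhol⟩ := hh s hs1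
  set ε := q * (1 - s) with hε
  have hε0 : 0 < ε := mul_pos hq (by linarith)
  obtain ⟨Cw, hCw, hw⟩ := T.wt_bound hg hdim ε hε0
  obtain ⟨B1, hB1, hsc1⟩ := hg.scale 1
  obtain ⟨BK, hBK, hscK⟩ := hg.scale K
  have hK := T.hK
  have h01 : 0 < g 1 - g 0 := by linarith [hg.mono (zero_lt_one (α := ℝ))]
  refine ⟨(B1 / (g 1 - g 0)) ^ s + Cw * BK * C3 + 2 * (1 + 2 * K) * (Cw * C3 * B1 ^ s),
    by positivity, fun x y hxy => ?_⟩
  have hD : 0 < g y - g x := by linarith [hg.mono hxy]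
  have hDs : 0 < (g y - g x) ^ s := by positivity
  have hc1 : 0 ≤ (B1 / (g 1 - g 0)) ^ s * (g y - g x) ^ s := by positivity
  have hc2 : 0 ≤ Cw * BK * C3 * (g y - g x) ^ s := by positivity
  have hc3 : 0 ≤ 2 * (1 + 2 * K) * (Cw * C3 * B1 ^ s) * (g y - g x) ^ s := by positivity
  by_cases hmeet : 0 ≤ y ∧ x ≤ 1
  swap
  · refine ⟨0, ?_⟩
    simp only [mass, Wd, Finset.sum_singleton, T.a0, T.b0, if_neg hmeet]
    positivity
  by_cases hlen : 1 ≤ y - x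
  · refine ⟨0, (T.mass_le_one hg 0 x y).trans ?_⟩
    have h1 := hsc1 x y 0 1 hxy (by linarith) (by linarith)
    have h2 : 1 ≤ (B1 / (g 1 - g 0)) ^ s * (g y - g x) ^ s := by
      rw [← Real.mul_rpow (by positivity) hD.le]
      apply Real.one_le_rpow _ hs0.le
      rw [div_mul_eq_mul_div, one_le_div h01]
      exact h1
    linarith
  push Not at hlen
  set l := y - x with hl
  have hl0 : 0 < l := by linarith
  have hex : ∃ k, δ k ≤ l := by
    obtain ⟨k, hk⟩ := exists_pow_lt_of_lt_one hl0 (show (1 / 2 : ℝ) < 1 by norm_num)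
    exact ⟨k, (T.dle k).trans hk.le⟩
  obtain ⟨k, hk1, hk2⟩ : ∃ k, δ (k + 1) ≤ l ∧ l < δ k := by
    classical
    have h1 := Nat.find_spec hex
    rcases hf : Nat.find hex with _ | k
    · rw [hf, T.d0] at h1; linarith
    · rw [hf] at h1
      exact ⟨k, h1, not_le.1 (Nat.find_min hex (by omega))⟩
  have hm := T.mpos k
  have hd := T.dpos (k + 1)
  refine ⟨k + 1, ?_⟩
  rw [mass_succ_eq]
  by_cases hκ : δ (k + 1) + m (k + 1) ≤ l
  · have hKl : δ (k + 1) + K * m (k + 1) ≤ K * l := by nlinarith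
    have hcells := T.cells hg.mono.monotone k (x := x - K * l) (y := y + K * l)
      (by nlinarith) (fun τ i => a (i :: τ) ≤ y ∧ x ≤ b (i :: τ)) (by
        rintro τ hτ i hi ⟨h1, h2⟩
        have := T.cell_le k τ hτ i hi
        have := T.pa k τ hτ i hi
        have := T.pb k τ hτ i hi
        constructor <;> linarith)
    have hsK := hscK x y (x - K * l) (y + K * l) hxy le_rfl le_rfl
    calc _ ≤ ∑ τ ∈ Wd n k, ∑ i ∈ Finset.range (n (k + 1)), (Cw * l ^ (-ε)) *
          (if a (i :: τ) ≤ y ∧ x ≤ b (i :: τ) then g (p τ (i + 1)) - g (p τ i) else 0) := by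
          refine Finset.sum_le_sum fun τ hτ => Finset.sum_le_sum fun i hi => ?_
          split_ifs with hc
          · have h1 : 0 < g (b τ) - g (a τ) := by linarith [hg.mono (T.ab hτ)]
            have h2 : 0 < g (p τ (i + 1)) - g (p τ i) := by
              linarith [hg.mono (T.plt hτ (Finset.mem_range.1 hi))]
            have h3 : δ k ^ (-ε) ≤ l ^ (-ε) :=
              Real.rpow_le_rpow_of_nonpos hl0 hk2.le (by linarith)
            calc wt g a b p (i :: τ)
                = wt g a b p τ / (g (b τ) - g (a τ)) * (g (p τ (i + 1)) - g (p τ i)) := by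
                  simp only [wt]; ring
              _ ≤ (Cw * l ^ (-ε)) * (g (p τ (i + 1)) - g (p τ i)) := by
                  gcongr
                  rw [div_le_iff₀ h1]
                  refine (hw k τ hτ).trans ?_
                  gcongr
          · simp
      _ = (Cw * l ^ (-ε)) * ∑ τ ∈ Wd n k, ∑ i ∈ Finset.range (n (k + 1)),
          (if a (i :: τ) ≤ y ∧ x ≤ b (i :: τ) then g (p τ (i + 1)) - g (p τ i) else 0) := by
          simp only [Finset.mul_sum]
      _ ≤ (Cw * l ^ (-ε)) * (BK * (g y - g x)) := by
          gcongr
          exact hcells.trans hsK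
      _ = Cw * BK * (l ^ (-ε) * (g y - g x)) := by ring
      _ ≤ Cw * BK * (C3 * (g y - g x) ^ s) := by
          apply mul_le_mul_of_nonneg_left _ (by positivity)
          exact hhol x y hxy (by linarith [hmeet.1]) (by linarith [hmeet.2])
      _ ≤ _ := by linarith
  · push Not at hκ
    set κ := δ (k + 1) + m (k + 1) with hκd
    have hκ0 : 0 < κ := by linarith
    have hKl : δ (k + 1) + K * m (k + 1) ≤ K * κ := by nlinarith
    have hcells := T.cells monotone_id k (x := x - K * κ) (y := y + K * κ)
      (by nlinarith) (fun τ i => a (i :: τ) ≤ y ∧ x ≤ b (i :: τ)) (by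
        rintro τ hτ i hi ⟨h1, h2⟩
        have := T.cell_le k τ hτ i hi
        have := T.pa k τ hτ i hi
        have := T.pb k τ hτ i hi
        constructor <;> linarith)
    simp only [id] at hcells
    set Q := Cw * C3 * B1 ^ s * (g y - g x) ^ s with hQ
    have hQ0 : 0 < Q := by positivity
    calc _ ≤ ∑ τ ∈ Wd n k, ∑ i ∈ Finset.range (n (k + 1)), (Q * (2 / κ)) *
          (if a (i :: τ) ≤ y ∧ x ≤ b (i :: τ) then p τ (i + 1) - p τ i else 0) := by
          refine Finset.sum_le_sum fun τ hτ => Finset.sum_le_sum fun i hi => ?_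
          have hi' := Finset.mem_range.1 hi
          have hmem := cons_mem_Wd hτ hi'
          split_ifs with hc
          · have hab := T.ab hmem
            have h1 := hg.mono hab
            have hle := T.len (k + 1) _ hmem
            have h01' := T.mem01 (k + 1) _ hmem
            have h2 := hhol _ _ hab (by linarith) (by linarith)
            rw [hle] at h2
            have h3 := hsc1 x y (a (i :: τ)) (b (i :: τ)) hxy (by linarith [hc.2]) (by linarith [hc.1])
            have h4 : wt g a b p (i :: τ) ≤ Q := by
              calc _ ≤ Cw * δ (k + 1) ^ (-ε) * (g (b (i :: τ)) - g (a (i :: τ))) := hw (k + 1) _ hmem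
                _ = Cw * (δ (k + 1) ^ (-ε) * (g (b (i :: τ)) - g (a (i :: τ)))) := by ring
                _ ≤ Cw * (C3 * (B1 * (g y - g x)) ^ s) := by
                    apply mul_le_mul_of_nonneg_left _ hCw.le
                    refine h2.trans (mul_le_mul_of_nonneg_left ?_ hC3.le)
                    exact Real.rpow_le_rpow (by linarith) h3 hs0.le
                _ = Q := by rw [Real.mul_rpow (by linarith) hD.le, hQ]; ring
            have h5 := T.cell_ge k τ hτ i hi'
            have h6 : 1 ≤ 2 / κ * (p τ (i + 1) - p τ i) := by
              rw [div_mul_eq_mul_div, one_le_div hκ0]; linarith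
            calc _ ≤ Q := h4
              _ ≤ Q * (2 / κ * (p τ (i + 1) - p τ i)) := le_mul_of_one_le_right hQ0.le h6
              _ = _ := by ring
          · simp
      _ = (Q * (2 / κ)) * ∑ τ ∈ Wd n k, ∑ i ∈ Finset.range (n (k + 1)),
          (if a (i :: τ) ≤ y ∧ x ≤ b (i :: τ) then p τ (i + 1) - p τ i else 0) := by
          simp only [Finset.mul_sum]
      _ ≤ (Q * (2 / κ)) * ((1 + 2 * K) * κ) := by
          gcongr
          linarith
      _ = 2 * (1 + 2 * K) * (Cw * C3 * B1 ^ s) * (g y - g x) ^ s := by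
          rw [hQ]; field_simp
      _ ≤ _ := by linarith

/-- The union of the intervals of level `k`. -/
def lvl (n : ℕ → ℕ) (a b : List ℕ → ℝ) (k : ℕ) : Set ℝ := ⋃ τ ∈ Wd n k, Icc (a τ) (b τ)

lemma lvl_compact (k : ℕ) : IsCompact (lvl n a b k) :=
  (Wd n k).isCompact_biUnion fun _ _ => isCompact_Icc

lemma lvl_succ (T : Tr n a b p δ m K) (k : ℕ) : lvl n a b (k + 1) ⊆ lvl n a b k := by
  intro x hx
  simp only [lvl, mem_iUnion] at hx ⊢
  obtain ⟨τ, hτ, hx⟩ := hx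
  obtain ⟨i, hi, ρ, hρ, rfl⟩ := mem_Wd_succ.1 hτ
  have := T.sub hρ hi
  exact ⟨ρ, hρ, this.1.trans hx.1, hx.2.trans this.2⟩

lemma lvl_anti (T : Tr n a b p δ m K) : Antitone (lvl n a b) :=
  antitone_nat_of_succ_le T.lvl_succ

lemma cover_mass (T : Tr n a b p δ m K) (hg : Dbl g H) (k : ℕ) (F : Finset ℕ) (x y : ℕ → ℝ)
    (hF : ∀ τ ∈ Wd n k, ∃ t ∈ F, a τ ≤ y t ∧ x t ≤ b τ) :
    1 ≤ ∑ t ∈ F, mass g n a b p k (x t) (y t) := by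
  rw [← T.wt_sum hg k]
  simp only [mass]
  rw [Finset.sum_comm]
  refine Finset.sum_le_sum fun τ hτ => ?_
  obtain ⟨t, ht, hc⟩ := hF τ hτ
  have hp := T.wt_pos hg k τ hτ
  refine le_trans ?_ (Finset.single_le_sum (f := fun t =>
    if a τ ≤ y t ∧ x t ≤ b τ then wt g a b p τ else 0) (fun t _ => ?_) ht)
  · simp [hc]
  · split_ifs <;> linarith

/-- Lower bound for finite sums over countable covers of the limit set by open intervals. -/
lemma cover_lower (T : Tr n a b p δ m K) (hg : Dbl g H) {C s : ℝ} (hC : 0 < C)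
    (hkey : ∀ x y : ℝ, x < y → ∃ k, mass g n a b p k x y ≤ C * (g y - g x) ^ s)
    (x y : ℕ → ℝ) (hxy : ∀ t, x t < y t) (hcov : (⋂ k, lvl n a b k) ⊆ ⋃ t, Ioo (x t) (y t)) :
    ∃ F : Finset ℕ, 1 / C ≤ ∑ t ∈ F, (g (y t) - g (x t)) ^ s := by
  have hopen : IsOpen (⋃ t, Ioo (x t) (y t)) := isOpen_iUnion fun t => isOpen_Ioo
  obtain ⟨k0, hk0⟩ := exists_subset_nhds_of_isCompact (V := lvl n a b) T.lvl_anti.directed_ge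
    lvl_compact (fun z hz => hopen.mem_nhds (hcov hz))
  obtain ⟨F, hF⟩ := (lvl_compact (n := n) (a := a) (b := b) k0).elim_finite_subcover
    (fun t => Ioo (x t) (y t)) (fun t => isOpen_Ioo) hk0
  choose κ hκ using fun t => hkey (x t) (y t) (hxy t)
  set k := max k0 (F.sup κ) with hk
  have h1 := T.cover_mass hg k F x y (by
    intro τ hτ
    have hin : a τ ∈ lvl n a b k0 := by
      apply T.lvl_anti (le_max_left k0 (F.sup κ))
      simp only [lvl, mem_iUnion]
      exact ⟨τ, hτ, le_rfl, (T.ab hτ).le⟩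
    have := hF hin
    simp only [mem_iUnion] at this
    obtain ⟨t, ht, h3⟩ := this
    exact ⟨t, ht, h3.2.le, h3.1.le.trans (T.ab hτ).le⟩)
  refine ⟨F, ?_⟩
  rw [div_le_iff₀ hC, Finset.sum_mul]
  refine h1.trans (Finset.sum_le_sum fun t ht => ?_)
  rw [mul_comm]
  refine le_trans ?_ (hκ t)
  exact T.mass_anti hg _ _ ((Finset.le_sup ht).trans (le_max_right _ _))

end Tr

lemma hausdorff_ne_zero (G : ℝ ≃ₜ ℝ) (Z : Set ℝ) {C s : ℝ} (hC : 0 < C)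
    (hs0 : 0 < s) (hs1 : s < 1)
    (hcov : ∀ x y : ℕ → ℝ, (∀ t, x t < y t) → Z ⊆ ⋃ t, Ioo (x t) (y t) →
      ∃ F : Finset ℕ, 1 / C ≤ ∑ t ∈ F, (G (y t) - G (x t)) ^ s) (hG : StrictMono G) :
    Measure.hausdorffMeasure s (G '' Z) ≠ 0 := by
  intro h0
  set θ : ℝ := 1 / (8 * C) with hθ
  have hθ0 : 0 < θ := by positivity
  rw [Measure.hausdorffMeasure_apply] at h0
  have h1 : (⨅ (t : ℕ → Set ℝ) (_ : G '' Z ⊆ ⋃ n, t n) (_ : ∀ n, Metric.ediam (t n) ≤ 1),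
      ∑' n, ⨆ _ : (t n).Nonempty, Metric.ediam (t n) ^ s) < ENNReal.ofReal θ := by
    refine lt_of_le_of_lt ?_ (ENNReal.ofReal_pos.2 hθ0)
    rw [← h0]
    exact le_iSup₂ (f := fun (r : ℝ≥0∞) (_ : 0 < r) =>
      ⨅ (t : ℕ → Set ℝ) (_ : G '' Z ⊆ ⋃ n, t n) (_ : ∀ n, Metric.ediam (t n) ≤ r),
      ∑' n, ⨆ _ : (t n).Nonempty, Metric.ediam (t n) ^ s) 1 one_pos
  simp only [iInf_lt_iff] at h1
  obtain ⟨t, ht, hd, hsum⟩ := h1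
  set D : ℕ → ℝ≥0∞ := fun n => ⨆ _ : (t n).Nonempty, Metric.ediam (t n) ^ s with hDd
  have hz : ∀ k, ∃ z d : ℝ, 0 ≤ d ∧ d ^ s ≤ (D k).toReal ∧ ∀ w ∈ t k, |w - z| ≤ d := by
    intro k
    rcases (t k).eq_empty_or_nonempty with he | ⟨z, hzt⟩
    · refine ⟨0, 0, le_rfl, ?_, by simp [he]⟩
      rw [Real.zero_rpow hs0.ne']; exact ENNReal.toReal_nonneg
    · have hfin : Metric.ediam (t k) ≠ ⊤ := ne_top_of_le_ne_top ENNReal.one_ne_top (hd k)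
      refine ⟨z, (Metric.ediam (t k)).toReal, ENNReal.toReal_nonneg, ?_, ?_⟩
      · have : D k = Metric.ediam (t k) ^ s := by
          simp only [hDd]
          exact iSup_pos ⟨z, hzt⟩
        rw [this, ENNReal.toReal_rpow]
      · intro w hw
        have := Metric.edist_le_ediam_of_mem hw hzt
        rw [edist_dist] at this
        have := ENNReal.toReal_mono hfin this
        rwa [ENNReal.toReal_ofReal dist_nonneg, Real.dist_eq] at this
  choose z d hd0 hdD hzd using hz
  set e : ℕ → ℝ := fun k => (θ / 2 / 2 ^ k) ^ (1 / s) with he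
  have he0 : ∀ k, 0 < e k := fun k => by simp only [he]; positivity
  have hes : ∀ k, e k ^ s = θ / 2 / 2 ^ k := fun k => by
    simp only [he]
    rw [← Real.rpow_mul (by positivity), one_div_mul_cancel hs0.ne', Real.rpow_one]
  obtain ⟨F, hF⟩ := hcov (fun k => G.symm (z k - (d k + e k))) (fun k => G.symm (z k + (d k + e k)))
    (fun k => by
      rw [← hG.lt_iff_lt]
      simp only [Homeomorph.apply_symm_apply]
      linarith [he0 k, hd0 k])
    (fun w hw => by
      have := ht (mem_image_of_mem G hw)
      simp only [mem_iUnion] at this ⊢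
      obtain ⟨k, hk⟩ := this
      have h2 := abs_le.1 (hzd k _ hk)
      have h3 := he0 k
      refine ⟨k, ?_, ?_⟩
      · rw [← hG.lt_iff_lt]
        simp only [Homeomorph.apply_symm_apply]
        linarith
      · rw [← hG.lt_iff_lt]
        simp only [Homeomorph.apply_symm_apply]
        linarith)
  simp only [Homeomorph.apply_symm_apply] at hF
  have hterm : ∀ k, (z k + (d k + e k) - (z k - (d k + e k))) ^ s ≤
      2 * ((D k).toReal + θ / 2 / 2 ^ k) := by
    intro k
    have h3 := he0 k
    have h4 := hd0 k
    rw [show z k + (d k + e k) - (z k - (d k + e k)) = 2 * (d k + e k) by ring,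
      Real.mul_rpow (by norm_num) (by linarith)]
    have h2 : (2 : ℝ) ^ s ≤ 2 := by
      calc (2 : ℝ) ^ s ≤ 2 ^ (1 : ℝ) := Real.rpow_le_rpow_of_exponent_le (by norm_num) hs1.le
        _ = 2 := Real.rpow_one 2
    have h5 := Real.rpow_add_le_add_rpow h4 h3.le hs0.le hs1.le
    rw [hes k] at h5
    have h6 := hdD k
    gcongr
    linarith
  have hDfin : ∀ k, D k ≠ ⊤ := ENNReal.ne_top_of_tsum_ne_top (ne_top_of_lt hsum)
  have hs1' : ∑ k ∈ F, (D k).toReal ≤ θ := by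
    rw [← ENNReal.toReal_sum (fun k _ => hDfin k)]
    apply ENNReal.toReal_le_of_le_ofReal hθ0.le
    exact (ENNReal.sum_le_tsum F).trans hsum.le
  have hs2 : ∑ k ∈ F, θ / 2 / 2 ^ k ≤ θ := by
    have := (summable_geometric_two' θ).sum_le_tsum F (fun k _ => by positivity)
    rwa [tsum_geometric_two'] at this
  have : 1 / C ≤ 4 * θ := by
    calc 1 / C ≤ _ := hF
      _ ≤ ∑ k ∈ F, 2 * ((D k).toReal + θ / 2 / 2 ^ k) := Finset.sum_le_sum fun k _ => hterm k
      _ = 2 * (∑ k ∈ F, (D k).toReal + ∑ k ∈ F, θ / 2 / 2 ^ k) := by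
          rw [← Finset.mul_sum, Finset.sum_add_distrib]
      _ ≤ 4 * θ := by linarith
  rw [hθ] at this
  have h8 : 4 * (1 / (8 * C)) = 1 / C / 2 := by field_simp; norm_num
  rw [h8] at this
  have : 0 < 1 / C := by positivity
  linarith

lemma Tr.dim_input {n : ℕ → ℕ} {a b : List ℕ → ℝ} {p : List ℕ → ℕ → ℝ} {δ m : ℕ → ℝ} {K : ℝ}
    (T : Tr n a b p δ m K) (hdim : dimH (⋂ k, Tr.lvl n a b k) = 1) (ε : ℝ) (hε : 0 < ε) :
    ∃ C : ℝ, 0 < C ∧ ∀ k, 1 / ((Wd n k).card * δ k) ≤ C * (δ k) ^ (-ε) := by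
  set e := min ε (1 / 2) with he
  have he0 : 0 < e := by rw [he]; positivity
  have he1 : e ≤ 1 / 2 := min_le_right _ _
  have hee : e ≤ ε := min_le_left _ _
  set s : NNReal := ⟨1 - e, by linarith⟩ with hs
  have hsv : (s : ℝ) = 1 - e := rfl
  have htop : Measure.hausdorffMeasure (s : ℝ) (⋂ k, Tr.lvl n a b k) = ⊤ := by
    apply hausdorffMeasure_of_lt_dimH
    rw [hdim]
    have : s < 1 := by rw [← NNReal.coe_lt_coe, hsv]; simp; linarith
    exact_mod_cast this
  have hd1 : ∀ k, δ k ≤ 1 := fun k => (T.dle k).trans (pow_le_one₀ (by norm_num) (by norm_num))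
  have hlim := Measure.hausdorffMeasure_le_liminf_sum (ι := fun k : ℕ => Wd n k) (s : ℝ)
    (⋂ k, Tr.lvl n a b k) (l := atTop) (fun k => ENNReal.ofReal (δ k)) (by
      rw [← ENNReal.ofReal_zero]
      apply ENNReal.tendsto_ofReal
      refine squeeze_zero (fun k => (T.dpos k).le) T.dle ?_
      exact tendsto_pow_atTop_nhds_zero_of_lt_one (by norm_num) (by norm_num))
    (fun k τ => Icc (a τ.1) (b τ.1))
    (Eventually.of_forall fun k τ => by
      rw [Real.ediam_Icc, T.len k τ.1 τ.2])
    (Eventually.of_forall fun k w hw => by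
      have := mem_iInter.1 hw k
      simp only [Tr.lvl, mem_iUnion] at this ⊢
      obtain ⟨τ, hτ, h⟩ := this
      exact ⟨⟨τ, hτ⟩, h⟩)
  rw [htop, top_le_iff] at hlim
  have hev : ∀ᶠ k in atTop, (1 : ℝ≥0∞) < ∑ τ : Wd n k, Metric.ediam (Icc (a τ.1) (b τ.1)) ^ (s : ℝ) :=
    eventually_lt_of_lt_liminf (by rw [hlim]; exact ENNReal.one_lt_top)
  have hev2 : ∀ᶠ k in atTop, 1 ≤ ((Wd n k).card : ℝ) * δ k ^ (1 - e) := by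
    filter_upwards [hev] with k hk
    have e1 : ∑ τ : Wd n k, Metric.ediam (Icc (a τ.1) (b τ.1)) ^ (s : ℝ) =
        ENNReal.ofReal (((Wd n k).card : ℝ) * δ k ^ (1 - e)) := by
      have : ∀ τ : Wd n k, Metric.ediam (Icc (a τ.1) (b τ.1)) ^ (s : ℝ) =
          ENNReal.ofReal (δ k ^ (1 - e)) := by
        intro τ
        rw [Real.ediam_Icc, T.len k τ.1 τ.2, ENNReal.ofReal_rpow_of_pos (T.dpos k), hsv]
      simp only [this]
      simp [ENNReal.ofReal_mul]
    rw [e1, ENNReal.lt_ofReal_iff_toReal_lt ENNReal.one_ne_top] at hk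
    simpa using hk.le
  obtain ⟨k0, hk0⟩ := eventually_atTop.1 hev2
  have hpos : ∀ k, 0 < 1 / ((Wd n k).card * δ k) := fun k => by
    have := T.cardpos k
    have := T.dpos k
    positivity
  have hS : 0 ≤ ∑ k ∈ Finset.range k0, 1 / ((Wd n k).card * δ k) :=
    Finset.sum_nonneg fun k _ => (hpos k).le
  refine ⟨1 + ∑ k ∈ Finset.range k0, 1 / ((Wd n k).card * δ k), by linarith, fun k => ?_⟩
  have hdk := T.dpos k
  have hcard := T.cardpos k
  have h1 : 1 ≤ δ k ^ (-ε) := Real.one_le_rpow_of_pos_of_le_one_of_nonpos hdk (hd1 k) (by linarith)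
  by_cases hk : k0 ≤ k
  · have h2 := hk0 k hk
    have h3 : 1 / ((Wd n k).card * δ k) ≤ δ k ^ (-e) := by
      rw [div_le_iff₀ (by positivity)]
      calc 1 ≤ ((Wd n k).card : ℝ) * δ k ^ (1 - e) := h2
        _ = _ := by
          rw [show 1 - e = -e + 1 by ring, Real.rpow_add hdk, Real.rpow_one]; ring
    have h4 : δ k ^ (-e) ≤ δ k ^ (-ε) :=
      Real.rpow_le_rpow_of_exponent_ge hdk (hd1 k) (by linarith)
    nlinarith
  · have h2 := Finset.single_le_sum (f := fun k => 1 / (((Wd n k).card : ℝ) * δ k))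
      (fun k _ => (hpos k).le) (Finset.mem_range.2 (not_le.1 hk))
    nlinarith

lemma Tr.main {n : ℕ → ℕ} {a b : List ℕ → ℝ} {p : List ℕ → ℕ → ℝ} {δ m : ℕ → ℝ} {K H : ℝ}
    (T : Tr n a b p δ m K) (hdim : dimH (⋂ k, Tr.lvl n a b k) = 1) (G : ℝ ≃ₜ ℝ) (hG : Dbl G H) :
    dimH (G '' (⋂ k, Tr.lvl n a b k)) = 1 := by
  apply le_antisymm
  · rw [← Real.dimH_univ]; exact dimH_mono (subset_univ _)
  · refine le_of_forall_lt fun c hc => ?_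
    obtain ⟨s, hcs, hs1⟩ := ENNReal.lt_iff_exists_nnreal_btwn.1 hc
    have hs1' : (s : ℝ) < 1 := by exact_mod_cast hs1
    have hs0 : (0 : ℝ) < s := by
      have : (0 : ℝ≥0∞) < s := lt_of_le_of_lt bot_le hcs
      exact_mod_cast this
    obtain ⟨C, hC, hkey⟩ := T.key hG (T.dim_input hdim) s hs0 hs1'
    refine lt_of_lt_of_le hcs (le_dimH_of_hausdorffMeasure_ne_zero ?_)
    exact hausdorff_ne_zero G _ hC hs0 hs1' (T.cover_lower hG hC hkey) hG.mono


/-- Translation of reversed zero-based words. -/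
def cvt (τ : List ℕ) : List ℕ := (τ.map (· + 1)).reverse

lemma cvt_nil : cvt [] = [] := rfl

lemma cvt_cons (i : ℕ) (τ : List ℕ) : cvt (i :: τ) = cvt τ ++ [i + 1] := by
  simp [cvt]

lemma validWord_append {n : ℕ → ℕ} {σ : List ℕ} {i : ℕ} :
    ValidWord n (σ ++ [i]) ↔ ValidWord n σ ∧ 1 ≤ i ∧ i ≤ n (σ.length + 1) := by
  constructor
  · intro h
    refine ⟨fun j hj => ?_, ?_⟩
    · have := h j (by simp; omega)
      simpa [List.getElem_append_left hj] using this
    · have := h σ.length (by simp)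
      simpa using this
  · rintro ⟨h, hi⟩ j hj
    simp only [List.length_append, List.length_singleton] at hj
    rcases Nat.lt_or_ge j σ.length with h1 | h1
    · have := h j h1
      simpa [List.getElem_append_left h1] using this
    · obtain rfl : j = σ.length := by omega
      simpa using hi

lemma cvt_valid {n : ℕ → ℕ} : ∀ k, ∀ τ ∈ Wd n k,
    ValidWord n (cvt τ) ∧ (cvt τ).length = k ∧ τ.length = k := by
  intro k
  induction k with
  | zero =>
    intro τ hτ
    simp only [Wd, Finset.mem_singleton] at hτ
    subst hτ
    refine ⟨fun j hj => ?_, rfl, rfl⟩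
    simp [cvt] at hj
  | succ k ih =>
    intro τ hτ
    obtain ⟨i, hi, ρ, hρ, rfl⟩ := mem_Wd_succ.1 hτ
    obtain ⟨h1, h2, h3⟩ := ih ρ hρ
    rw [cvt_cons, validWord_append, h2]
    refine ⟨⟨h1, by omega, by omega⟩, by simp [h2], by simp [h3]⟩

lemma cvt_surj {n : ℕ → ℕ} : ∀ k, ∀ σ : List ℕ, ValidWord n σ → σ.length = k →
    ∃ τ ∈ Wd n k, cvt τ = σ := by
  intro k
  induction k with
  | zero =>
    intro σ _ hσ
    exact ⟨[], by simp [Wd], by rw [List.length_eq_zero_iff.1 hσ]; rfl⟩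
  | succ k ih =>
    intro σ hv hσ
    rcases List.eq_nil_or_concat σ with h | ⟨ρ, i, h⟩
    · subst h
      simp at hσ
    · subst h
      simp only [List.concat_eq_append, List.length_append, List.length_singleton] at hσ hv ⊢
      have hl : ρ.length = k := by omega
      obtain ⟨h1, h2, h3⟩ := validWord_append.1 hv
      obtain ⟨τ, hτ, hc⟩ := ih ρ h1 hl
      rw [hl] at h3
      refine ⟨(i - 1) :: τ, cons_mem_Wd hτ (by omega), ?_⟩
      rw [cvt_cons, hc, Nat.sub_add_cancel h2]

lemma Ek_eq_lvl {n : ℕ → ℕ} {c : ℕ → ℝ} {η : ℕ → ℕ → ℝ}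
    (S : HomogeneousPerfectStructure n c η) (k : ℕ) :
    S.Ek k = Tr.lvl n (fun τ => S.a (cvt τ)) (fun τ => S.b (cvt τ)) k := by
  ext x
  simp only [HomogeneousPerfectStructure.Ek, Tr.lvl, mem_iUnion, mem_setOf_eq, exists_prop]
  constructor
  · rintro ⟨σ, ⟨h1, h2⟩, hx⟩
    obtain ⟨τ, hτ, rfl⟩ := cvt_surj k σ h1 h2
    exact ⟨τ, hτ, hx⟩
  · rintro ⟨τ, hτ, hx⟩
    obtain ⟨h1, h2, -⟩ := cvt_valid k τ hτ
    exact ⟨cvt τ, ⟨h1, h2⟩, hx⟩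

/-- Cut points. -/
noncomputable def cutPt (n : ℕ → ℕ) (a b : List ℕ → ℝ) (τ : List ℕ) (i : ℕ) : ℝ :=
  if i = 0 then a τ else if i = n (τ.length + 1) then b τ
    else (b ((i - 1) :: τ) + a (i :: τ)) / 2

lemma exists_Tr {n : ℕ → ℕ} {c : ℕ → ℝ} {η : ℕ → ℕ → ℝ}
    (S : HomogeneousPerfectStructure n c η)
    (L : ℝ) (hL : 1 ≤ L) (c' : ℝ) (hc' : 0 < c')
    (hratio : ∀ k, 1 ≤ k → ∀ i j, 1 ≤ i → i ≤ n k - 1 → 1 ≤ j → j ≤ n k - 1 →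
      1 / L ≤ η k i / η k j ∧ η k i / η k j ≤ L)
    (hedge : ∀ k, 1 ≤ k → ∀ i, 1 ≤ i → i ≤ n k - 1 →
      η k 0 + η k (n k) ≤ c' * η k i) :
    Tr n (fun τ => S.a (cvt τ)) (fun τ => S.b (cvt τ))
      (cutPt n (fun τ => S.a (cvt τ)) (fun τ => S.b (cvt τ)))
      (fun k => ∏ j ∈ Finset.range k, c (j + 1)) (fun k => η k 1 / L) (L ^ 2 + c' * L) := by
  have hL0 : 0 < L := by linarith
  have hn2 : ∀ k, 2 ≤ n (k + 1) := fun k => S.hn (k + 1) (by omega)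
  have hpos : ∀ k i, 1 ≤ i → i ≤ n (k + 1) - 1 → 0 < η (k + 1) i := by
    intro k i h1 h2
    have h := (hratio (k + 1) (by omega) i i h1 h2 h1 h2).1
    have h0 : 0 < 1 / L := by positivity
    refine lt_of_le_of_ne (S.hη (k + 1) i (by omega) (by omega)) (fun he => ?_)
    rw [← he] at h
    simp at h
    linarith
  have hmpos : ∀ k, 0 < η (k + 1) 1 / L := fun k =>
    div_pos (hpos k 1 le_rfl (by have := hn2 k; omega)) hL0
  have hmid_ge : ∀ k i, 1 ≤ i → i ≤ n (k + 1) - 1 → η (k + 1) 1 / L ≤ η (k + 1) i := by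
    intro k i h1 h2
    have h := (hratio (k + 1) (by omega) 1 i le_rfl (by have := hn2 k; omega) h1 h2).2
    rw [div_le_iff₀ (hpos k i h1 h2)] at h
    rw [div_le_iff₀ hL0]
    linarith
  have hmid_le : ∀ k i, 1 ≤ i → i ≤ n (k + 1) - 1 →
      η (k + 1) i ≤ L ^ 2 * (η (k + 1) 1 / L) := by
    intro k i h1 h2
    have h := (hratio (k + 1) (by omega) i 1 h1 h2 le_rfl (by have := hn2 k; omega)).2
    rw [div_le_iff₀ (hpos k 1 le_rfl (by have := hn2 k; omega))] at h
    have : L ^ 2 * (η (k + 1) 1 / L) = L * η (k + 1) 1 := by field_simp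
    linarith
  have hedge' : ∀ k, η (k + 1) 0 + η (k + 1) (n (k + 1)) ≤ c' * L * (η (k + 1) 1 / L) := by
    intro k
    have h := hedge (k + 1) (by omega) 1 le_rfl (by have := hn2 k; omega)
    have : c' * L * (η (k + 1) 1 / L) = c' * η (k + 1) 1 := by field_simp
    linarith
  have he0 : ∀ k, 0 ≤ η (k + 1) 0 := fun k => S.hη (k + 1) 0 (by omega) (by omega)
  have hen : ∀ k, 0 ≤ η (k + 1) (n (k + 1)) := fun k => S.hη (k + 1) _ (by omega) le_rfl
  have hdpos : ∀ k, 0 < ∏ j ∈ Finset.range k, c (j + 1) := fun k =>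
    Finset.prod_pos fun j _ => (S.hc (j + 1) (by omega)).1
  have hlen : ∀ k, ∀ τ ∈ Wd n k,
      S.b (cvt τ) - S.a (cvt τ) = ∏ j ∈ Finset.range k, c (j + 1) := by
    intro k
    induction k with
    | zero =>
      intro τ hτ
      simp only [Wd, Finset.mem_singleton] at hτ
      subst hτ
      rw [cvt_nil, S.root_a, S.root_b]
      simp
    | succ k ih =>
      intro τ hτ
      obtain ⟨i, hi, ρ, hρ, rfl⟩ := mem_Wd_succ.1 hτ
      obtain ⟨h1, h2, h3⟩ := cvt_valid k ρ hρ
      rw [cvt_cons, S.len_eq _ h1 _ (by omega) (by rw [h2]; omega), ih ρ hρ, h2,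
        Finset.prod_range_succ]
      ring
  -- left part of a cell
  have hleft : ∀ k, ∀ τ ∈ Wd n k, ∀ i < n (k + 1),
      S.a (cvt (i :: τ)) - cutPt n (fun τ => S.a (cvt τ)) (fun τ => S.b (cvt τ)) τ i
        = if i = 0 then η (k + 1) 0 else η (k + 1) i / 2 := by
    intro k τ hτ i hi
    obtain ⟨h1, h2, h3⟩ := cvt_valid k τ hτ
    unfold cutPt
    rw [h3]
    by_cases h0 : i = 0
    · subst h0
      have := S.gap_left _ h1
      rw [h2] at this
      simpa [cvt_cons] using this
    · obtain ⟨j, rfl⟩ : ∃ j, i = j + 1 := ⟨i - 1, by omega⟩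
      have := S.gap_mid _ h1 (j + 1) (by omega) (by rw [h2]; omega)
      rw [h2] at this
      rw [if_neg h0, if_neg (by omega), if_neg h0]
      simp only [Nat.add_sub_cancel, cvt_cons]
      linarith
  have hright : ∀ k, ∀ τ ∈ Wd n k, ∀ i < n (k + 1),
      cutPt n (fun τ => S.a (cvt τ)) (fun τ => S.b (cvt τ)) τ (i + 1) - S.b (cvt (i :: τ))
        = if i + 1 = n (k + 1) then η (k + 1) (n (k + 1)) else η (k + 1) (i + 1) / 2 := by
    intro k τ hτ i hi
    obtain ⟨h1, h2, h3⟩ := cvt_valid k τ hτ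
    unfold cutPt
    rw [h3]
    rw [if_neg (by omega)]
    by_cases h0 : i + 1 = n (k + 1)
    · have := S.gap_right _ h1
      rw [h2] at this
      rw [if_pos h0, if_pos h0, cvt_cons, h0]
      exact this
    · have := S.gap_mid _ h1 (i + 1) (by omega) (by rw [h2]; omega)
      rw [h2] at this
      rw [if_neg h0, if_neg h0]
      simp only [Nat.add_sub_cancel, cvt_cons]
      linarith
  refine ⟨S.root_a, S.root_b, hn2, ?_, hmpos, hdpos, hlen, ?_, ?_, ?_, ?_, ?_, ?_⟩
  · nlinarith [mul_pos hc' hL0]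
  · intro k τ hτ
    simp [cutPt]
  · intro k τ hτ
    obtain ⟨h1, h2, h3⟩ := cvt_valid k τ hτ
    have := hn2 k
    unfold cutPt
    rw [h3, if_neg (by omega), if_pos rfl]
  · intro k τ hτ i hi
    have h := hleft k τ hτ i hi
    have : 0 ≤ if i = 0 then η (k + 1) 0 else η (k + 1) i / 2 := by
      split_ifs with h0
      · exact he0 k
      · linarith [hpos k i (by omega) (by omega)]
    rw [← h] at this
    simpa using this
  · intro k τ hτ i hi
    have h := hright k τ hτ i hi
    have : 0 ≤ if i + 1 = n (k + 1) then η (k + 1) (n (k + 1)) else η (k + 1) (i + 1) / 2 := by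
      split_ifs with h0
      · exact hen k
      · linarith [hpos k (i + 1) (by omega) (by omega)]
    rw [← h] at this
    simpa using this
  · intro k τ hτ i hi
    have h1 := hleft k τ hτ i hi
    have h2 := hright k τ hτ i hi
    have h3 := hlen (k + 1) (i :: τ) (cons_mem_Wd hτ hi)
    have h4 := he0 k
    have h5 := hen k
    have h6 := hedge' k
    have hm := hmpos k
    have hn := hn2 k
    have h7 : 0 < L ^ 2 * (η (k + 1) 1 / L) := by positivity
    have h8 : 0 < c' * L * (η (k + 1) 1 / L) := by positivity
    rw [add_mul]
    split_ifs at h1 h2 with hi0 hi1 hi1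
    · omega
    · have := hmid_le k (i + 1) (by omega) (by omega)
      linarith
    · have := hmid_le k i (by omega) (by omega)
      linarith
    · have := hmid_le k i (by omega) (by omega)
      have := hmid_le k (i + 1) (by omega) (by omega)
      linarith
  · intro k τ hτ i hi
    have h1 := hleft k τ hτ i hi
    have h2 := hright k τ hτ i hi
    have h3 := hlen (k + 1) (i :: τ) (cons_mem_Wd hτ hi)
    have h4 := he0 k
    have h5 := hen k
    have hm := hmpos k
    have hn := hn2 k
    split_ifs at h1 h2 with hi0 hi1 hi1
    · omega
    · have := hmid_ge k (i + 1) (by omega) (by omega)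
      linarith
    · have := hmid_ge k i (by omega) (by omega)
      linarith
    · have := hmid_ge k i (by omega) (by omega)
      have := hmid_ge k (i + 1) (by omega) (by omega)
      linarith

lemma qs_bound {f : ℝ ≃ₜ ℝ} (hf : IsQuasisymmetric f) :
    ∃ H : ℝ, 1 ≤ H ∧ ∀ x t : ℝ, t ≠ 0 → |f x - f (x + t)| ≤ H * |f x - f (x - t)| := by
  obtain ⟨h, hh⟩ := hf
  refine ⟨max 1 (h ⟨1, by simp⟩ : ℝ), le_max_left _ _, fun x t ht => ?_⟩
  have h1 := hh (x + t) (x - t) x (by simpa using ht) (by intro h; apply ht; linarith)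
    (by intro h; apply ht; linarith)
  have h2 : |x - (x + t)| / |x - (x - t)| = 1 := by
    rw [show x - (x + t) = -t by ring, show x - (x - t) = t by ring, abs_neg,
      div_self (abs_ne_zero.2 ht)]
  simp only [h2] at h1
  have h3 : 0 < |f x - f (x - t)| := by
    rw [abs_pos, sub_ne_zero]
    intro he
    have := f.injective he
    apply ht
    linarith
  rw [div_le_iff₀ h3] at h1
  exact h1.trans (mul_le_mul_of_nonneg_right (le_max_right _ _) h3.le)

lemma dbl_of_bound {g : ℝ → ℝ} {H : ℝ} (hm : StrictMono g) (hH : 1 ≤ H)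
    (hb : ∀ x t : ℝ, t ≠ 0 → |g x - g (x + t)| ≤ H * |g x - g (x - t)|) : Dbl g H := by
  refine ⟨hm, hH, fun x t ht => ?_, fun x t ht => ?_⟩
  · have h := hb x t ht.ne'
    have h1 : g x < g (x + t) := hm (by linarith)
    have h2 : g (x - t) < g x := hm (by linarith)
    rwa [abs_of_neg (by linarith), abs_of_pos (by linarith), neg_sub] at h
  · have h := hb x (-t) (by linarith)
    rw [← sub_eq_add_neg, sub_neg_eq_add] at h
    have h1 : g x < g (x + t) := hm (by linarith)
    have h2 : g (x - t) < g x := hm (by linarith)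
    rwa [abs_of_pos (by linarith), abs_of_neg (by linarith), neg_sub] at h

lemma final_step {X : Set ℝ}
    (hX : ∀ (G : ℝ ≃ₜ ℝ) (H : ℝ), Dbl G H → dimH (G '' X) = 1)
    (f : ℝ ≃ₜ ℝ) (hf : IsQuasisymmetric f) : dimH (f '' X) = 1 := by
  obtain ⟨H, hH, hb⟩ := qs_bound hf
  rcases f.continuous.strictMono_of_inj f.injective with hm | hm
  · exact hX f H (dbl_of_bound hm hH hb)
  · have hG : Dbl (f.trans (Homeomorph.neg ℝ)) H := by
      apply dbl_of_bound _ hH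
      · intro x t ht
        have h := hb x t ht
        have e1 : ∀ u v : ℝ, |(-u) - (-v)| = |u - v| := fun u v => by
          rw [show -u - -v = -(u - v) by ring, abs_neg]
        change |(-f x) - (-f (x + t))| ≤ H * |(-f x) - (-f (x - t))|
        rw [e1, e1]
        exact h
      · intro x y hxy
        simpa using hm hxy
    have h := hX _ H hG
    have h2 : (f.trans (Homeomorph.neg ℝ)) '' X = (IsometryEquiv.neg ℝ) '' (f '' X) := by
      rw [image_image]
      rfl
    rw [h2, (IsometryEquiv.neg ℝ).isometry.dimH_image] at h
    exact h


/-- Yang's theorem. Let `E = E(J_∅,{n_k},{c_k},{η_{k,j}})` be a homogeneous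
perfect set such that there are `L ≥ 1` and `c > 0` with `1/L ≤ η_{k,i}/η_{k,j} ≤ L` and
`η_{k,0} + η_{k,n_k} ≤ c·η_{k,i}` for all `k ≥ 1` and all `1 ≤ i, j ≤ n_k − 1`.
If `dim_H E = 1`, then `dim_H f(E) = 1` for every 1-dimensional quasisymmetric mapping `f`. -/
theorem homogeneous_perfect_minimal_yang
    (n : ℕ → ℕ) (c : ℕ → ℝ) (η : ℕ → ℕ → ℝ)
    (S : HomogeneousPerfectStructure n c η)
    (L : ℝ) (hL : 1 ≤ L) (c' : ℝ) (hc' : 0 < c')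
    (hratio : ∀ k, 1 ≤ k → ∀ i j, 1 ≤ i → i ≤ n k - 1 → 1 ≤ j → j ≤ n k - 1 →
      1 / L ≤ η k i / η k j ∧ η k i / η k j ≤ L)
    (hedge : ∀ k, 1 ≤ k → ∀ i, 1 ≤ i → i ≤ n k - 1 →
      η k 0 + η k (n k) ≤ c' * η k i)
    (hdim : dimH S.E = 1) :
    ∀ f : ℝ ≃ₜ ℝ, IsQuasisymmetric f → dimH (f '' S.E) = 1 := by
  intro f hf
  have T := exists_Tr S L hL c' hc' hratio hedge
  have hE : S.E = ⋂ k, Tr.lvl n (fun τ => S.a (cvt τ)) (fun τ => S.b (cvt τ)) k := by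
    unfold HomogeneousPerfectStructure.E
    exact iInter_congr (Ek_eq_lvl S)
  rw [hE] at hdim ⊢
  exact final_step (fun G H hG => T.main hdim G hG) f hf
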